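/- arXiv:math/0409149 — 2 statements merged into one kernel-verified Lean document; each statement's English description precedes it below -/
import Mathlib

section
/- Let 1 ≤ k ≤ n and let a_1 ≤ a_2 ≤ ⋯ ≤ a_k be integers with 1 ≤ a_1 and a_ι ≤ n−k+ι+1 for each ι = 1,…,k. Then the product set W_{⟦a_k,n⟧}·W_{⟦a_{k−1},n−1⟧}⋯W_{⟦a_1,n−k+1⟧}·W_{J_k} is the union, over tuples (r_1,…,r_k) ∈ ∏_{ι=1}^{k} ⟦a_ι, n−k+ι+1⟧, of the left cosets w_{r_k}^{n} w_{r_{k−1}}^{n−1} ⋯ w_{r_1}^{n−k+1} W_{J_k}, and these cosets are pairwise distinct. -/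
open scoped Pointwise
open Matrix

noncomputable section

/-- The simple reflection `s_i` (1-based indexing, `1 ≤ i ≤ n`), i.e. the transposition
`(i, i+1)` of `{1, …, n+1}`, as a permutation of `Fin (n+1)`; junk value `1` outside the range. -/
def sRef (n i : ℕ) : Equiv.Perm (Fin (n + 1)) :=
  if h : 1 ≤ i ∧ i ≤ n then Equiv.swap ⟨i - 1, by omega⟩ ⟨i, by omega⟩ else 1

/-- `w_r^{r'} = s_r s_{r+1} ⋯ s_{r'}` (equal to `1` when `r = r' + 1`). -/
def wRR (n r r' : ℕ) : Equiv.Perm (Fin (n + 1)) :=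
  ((List.range' r (r' + 1 - r)).map (sRef n)).prod

/-- The subgroup `W_I` of the Weyl group generated by the `s_i`, `i ∈ I`. -/
def WI (n : ℕ) (I : Finset ℕ) : Subgroup (Equiv.Perm (Fin (n + 1))) :=
  Subgroup.closure (sRef n '' I)

/-- `w_i = w_i^n w_{i-1}^{n-1} ⋯ w_1^{n-i+1}`. -/
def wBig (n i : ℕ) : Equiv.Perm (Fin (n + 1)) :=
  ((List.range i).map fun t => wRR n (i - t) (n - t)).prod

/-- `w_{r_k}^n w_{r_{k-1}}^{n-1} ⋯ w_{r_1}^{n-k+1}` for a tuple `r : Fin k → ℕ`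
(where `r ι` is the paper's `r_{ι+1}`). -/
def wProd (n k : ℕ) (r : Fin k → ℕ) : Equiv.Perm (Fin (n + 1)) :=
  (List.ofFn fun t : Fin k => wRR n (r t.rev) (n - (t : ℕ))).prod

/-- The Coxeter length of `w` with respect to the generators `s_1, …, s_n`. -/
def lenW (n : ℕ) (w : Equiv.Perm (Fin (n + 1))) : ℕ :=
  sInf { d | ∃ f : Fin d → ℕ, (∀ m, f m ∈ Finset.Icc 1 n) ∧
    (List.ofFn fun m => sRef n (f m)).prod = w }

theorem sRef_val (n i : ℕ) (h1 : 1 ≤ i) (h2 : i ≤ n) (x : Fin (n + 1)) :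
    (sRef n i x : ℕ) = if (x : ℕ) = i - 1 then i else if (x : ℕ) = i then i - 1 else x := by
  unfold sRef
  rw [dif_pos ⟨h1, h2⟩, Equiv.swap_apply_def]
  simp only [Fin.ext_iff]
  split_ifs <;> simp

theorem wRR_top (n m : ℕ) : wRR n (m + 1) m = 1 := by
  simp [wRR]

theorem wRR_step (n r m : ℕ) (h : r ≤ m) : wRR n r m = sRef n r * wRR n (r + 1) m := by
  unfold wRR
  have e : m + 1 - r = (m + 1 - (r + 1)) + 1 := by omega
  rw [e, List.range'_succ]
  simp

theorem sRef_sq (n i : ℕ) : sRef n i * sRef n i = 1 := by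
  unfold sRef
  split_ifs <;> simp

theorem wRR_val (n m : ℕ) (hm : m ≤ n) (d : ℕ) : ∀ r, 1 ≤ r → r + d = m + 1 →
    ∀ x : Fin (n + 1), (wRR n r m x : ℕ) =
      if (x : ℕ) = m then r - 1 else if r - 1 ≤ (x : ℕ) ∧ (x : ℕ) < m then (x : ℕ) + 1 else x := by
  induction d with
  | zero =>
    intro r h1 h2 x
    obtain rfl : r = m + 1 := by omega
    rw [wRR_top]
    simp only [Equiv.Perm.coe_one, id]
    split_ifs <;> omega
  | succ d ih =>
    intro r h1 h2 x
    rw [wRR_step n r m (by omega), Equiv.Perm.mul_apply, sRef_val n r h1 (by omega),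
      ih (r + 1) (by omega) (by omega) x]
    split_ifs <;> omega

theorem sRef_mul_wRR_lt (n m r i : ℕ) (hm : m ≤ n) (hr : 1 ≤ r) (hrm : r ≤ m + 1)
    (hi : 1 ≤ i) (h : i + 1 < r) : sRef n i * wRR n r m = wRR n r m * sRef n i := by
  ext x
  rw [Equiv.Perm.mul_apply, Equiv.Perm.mul_apply, sRef_val n i hi (by omega),
    wRR_val n m hm (m + 1 - r) r hr (by omega), wRR_val n m hm (m + 1 - r) r hr (by omega),
    sRef_val n i hi (by omega)]
  split_ifs <;> omega

theorem sRef_mul_wRR_gt (n m r i : ℕ) (hm : m ≤ n) (hr : 1 ≤ r) (hrm : r ≤ m + 1)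
    (hi : i ≤ m) (h : r < i) : sRef n i * wRR n r m = wRR n r m * sRef n (i - 1) := by
  ext x
  rw [Equiv.Perm.mul_apply, Equiv.Perm.mul_apply, sRef_val n i (by omega) (by omega),
    wRR_val n m hm (m + 1 - r) r hr (by omega), wRR_val n m hm (m + 1 - r) r hr (by omega),
    sRef_val n (i - 1) (by omega) (by omega)]
  split_ifs <;> omega

theorem sRef_mem (n i a b : ℕ) (h1 : a ≤ i) (h2 : i ≤ b) : sRef n i ∈ WI n (Finset.Icc a b) :=
  Subgroup.subset_closure ⟨i, by simp [h1, h2], rfl⟩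

theorem WI_mono (n a b a' b' : ℕ) (h1 : a' ≤ a) (h2 : b ≤ b') :
    WI n (Finset.Icc a b) ≤ WI n (Finset.Icc a' b') := by
  apply Subgroup.closure_mono
  apply Set.image_mono
  exact_mod_cast Finset.Icc_subset_Icc h1 h2

theorem wRR_mem (n a m r : ℕ) (h : a ≤ r) : wRR n r m ∈ WI n (Finset.Icc a m) := by
  unfold wRR
  apply Subgroup.list_prod_mem
  intro x hx
  obtain ⟨i, hi, rfl⟩ := List.mem_map.1 hx
  rw [List.mem_range'_1] at hi
  exact sRef_mem n i a m (by omega) (by omega)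

theorem WI_decomp (n a m : ℕ) (ha : 1 ≤ a) (hm : m ≤ n) (ham : a ≤ m + 1)
    (g : Equiv.Perm (Fin (n + 1))) (hg : g ∈ WI n (Finset.Icc a m)) :
    ∃ r, a ≤ r ∧ r ≤ m + 1 ∧ ∃ v ∈ WI n (Finset.Icc a (m - 1)), g = wRR n r m * v := by
  have key : ∀ i, a ≤ i → i ≤ m → ∀ g : Equiv.Perm (Fin (n + 1)),
      (∃ r, a ≤ r ∧ r ≤ m + 1 ∧ ∃ v ∈ WI n (Finset.Icc a (m - 1)), g = wRR n r m * v) →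
      (∃ r, a ≤ r ∧ r ≤ m + 1 ∧ ∃ v ∈ WI n (Finset.Icc a (m - 1)),
        sRef n i * g = wRR n r m * v) := by
    rintro i hi1 hi2 g ⟨r, h1, h2, v, hv, rfl⟩
    rcases lt_trichotomy i r with h | h | h
    · by_cases h' : i + 1 = r
      · refine ⟨i, hi1, by omega, v, hv, ?_⟩
        rw [wRR_step n i m hi2, h', mul_assoc]
      · refine ⟨r, h1, h2, sRef n i * v,
          Subgroup.mul_mem _ (sRef_mem n i _ _ hi1 (by omega)) hv, ?_⟩
        rw [← mul_assoc, sRef_mul_wRR_lt n m r i hm (by omega) h2 (by omega) (by omega), mul_assoc]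
    · subst h
      refine ⟨i + 1, by omega, by omega, v, hv, ?_⟩
      rw [wRR_step n i m hi2, ← mul_assoc, ← mul_assoc, sRef_sq, one_mul]
    · refine ⟨r, h1, h2, sRef n (i - 1) * v,
        Subgroup.mul_mem _ (sRef_mem n _ _ _ (by omega) (by omega)) hv, ?_⟩
      rw [← mul_assoc, sRef_mul_wRR_gt n m r i hm (by omega) h2 hi2 h, mul_assoc]
  unfold WI at hg
  induction hg using Subgroup.closure_induction_left with
  | one => exact ⟨m + 1, ham, le_rfl, 1, Subgroup.one_mem _, by rw [wRR_top, one_mul]⟩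
  | mul_left x hx y hy ih =>
    obtain ⟨i, hi, rfl⟩ := hx
    simp only [Finset.coe_Icc, Set.mem_Icc] at hi
    exact key i hi.1 hi.2 y ih
  | inv_mul_cancel x hx y hy ih =>
    obtain ⟨i, hi, rfl⟩ := hx
    simp only [Finset.coe_Icc, Set.mem_Icc] at hi
    rw [inv_eq_of_mul_eq_one_left (sRef_sq n i)]
    exact key i hi.1 hi.2 y ih

/-- `wProd` with general top index. -/
def wP (n m k : ℕ) (r : Fin k → ℕ) : Equiv.Perm (Fin (n + 1)) :=
  (List.ofFn fun t : Fin k => wRR n (r t.rev) (m - (t : ℕ))).prod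

/-- product of the parabolic subgroups with general top index. -/
def PP (n m k : ℕ) (a : Fin k → ℕ) : Set (Equiv.Perm (Fin (n + 1))) :=
  (List.ofFn fun t : Fin k =>
    ((WI n (Finset.Icc (a t.rev) (m - (t : ℕ))) : Subgroup _) : Set (Equiv.Perm (Fin (n + 1))))).prod

theorem wP_succ (n m k : ℕ) (r : Fin (k + 1) → ℕ) :
    wP n m (k + 1) r = wRR n (r (Fin.last k)) m * wP n (m - 1) k (fun i => r i.castSucc) := by
  unfold wP
  rw [List.ofFn_succ, List.prod_cons]
  simp only [Fin.rev_zero, Fin.val_zero, Nat.sub_zero, Fin.rev_succ, Fin.val_succ]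
  congr 4
  funext t
  congr 1
  omega

theorem PP_succ (n m k : ℕ) (a : Fin (k + 1) → ℕ) :
    PP n m (k + 1) a = ((WI n (Finset.Icc (a (Fin.last k)) m) : Subgroup _) :
      Set (Equiv.Perm (Fin (n + 1)))) * PP n (m - 1) k (fun i => a i.castSucc) := by
  unfold PP
  rw [List.ofFn_succ, List.prod_cons]
  simp only [Fin.rev_zero, Fin.val_zero, Nat.sub_zero, Fin.rev_succ, Fin.val_succ]
  congr 4
  funext t
  rw [show m - ((t : ℕ) + 1) = m - 1 - (t : ℕ) by omega]

theorem PP_absorb (n m k : ℕ) (a : Fin k → ℕ) (b : ℕ) (hb1 : 1 ≤ b) (hb : ∀ i, a i ≤ b)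
    (v y : Equiv.Perm (Fin (n + 1))) (hv : v ∈ WI n (Finset.Icc b m))
    (hy : y ∈ PP n m k a * (WI n (Finset.Icc 1 (m - k)) : Set (Equiv.Perm (Fin (n + 1))))) :
    v * y ∈ PP n m k a * (WI n (Finset.Icc 1 (m - k)) : Set (Equiv.Perm (Fin (n + 1)))) := by
  cases k with
  | zero =>
    simp only [PP, List.ofFn_zero, List.prod_nil, one_mul, Nat.sub_zero, SetLike.mem_coe] at hy ⊢
    exact Subgroup.mul_mem _ (WI_mono n _ _ _ _ hb1 le_rfl hv) hy
  | succ k =>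
    rw [PP_succ, mul_assoc] at hy ⊢
    obtain ⟨u, hu, z, hz, rfl⟩ := Set.mem_mul.1 hy
    rw [← mul_assoc v u z]
    exact Set.mul_mem_mul (Subgroup.mul_mem _ (WI_mono n _ _ _ _ (hb _) le_rfl hv) hu) hz

theorem cover (n k : ℕ) : ∀ m, k ≤ m → m ≤ n → ∀ a : Fin k → ℕ, Monotone a → (∀ i, 1 ≤ a i) →
    (∀ i : Fin k, a i ≤ m - k + (i : ℕ) + 2) → ∀ g : Equiv.Perm (Fin (n + 1)),
    (g ∈ PP n m k a * (WI n (Finset.Icc 1 (m - k)) : Set (Equiv.Perm (Fin (n + 1)))) ↔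
      ∃ r : Fin k → ℕ, (∀ i : Fin k, a i ≤ r i ∧ r i ≤ m - k + (i : ℕ) + 2) ∧
        ∃ h ∈ WI n (Finset.Icc 1 (m - k)), wP n m k r * h = g) := by
  induction k with
  | zero =>
    intro m _ _ a _ _ _ g
    simp [PP, wP]
  | succ k ih =>
    intro m hkm hmn a ham ha1 hau g
    have e : m - (k + 1) = m - 1 - k := by omega
    have IH := ih (m - 1) (by omega) (by omega) (fun i => a i.castSucc)
      (fun i j hij => ham (by simpa using hij)) (fun i => ha1 _)
      (fun i => by have := hau i.castSucc; simp only [Fin.val_castSucc] at this; omega)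
    have hl := hau (Fin.last k)
    simp only [Fin.val_last] at hl
    rw [e, PP_succ, mul_assoc]
    constructor
    · intro hg
      obtain ⟨u, hu, y, hy, rfl⟩ := Set.mem_mul.1 hg
      obtain ⟨r, h1, h2, v, hv, rfl⟩ := WI_decomp n _ m (ha1 _) hmn (by omega) u hu
      have hvy := PP_absorb n (m - 1) k _ _ (ha1 (Fin.last k))
        (fun i => ham (Fin.le_last _)) v y hv hy
      obtain ⟨r', hr', h, hh, he⟩ := (IH _).1 hvy
      refine ⟨Fin.snoc (α := fun _ => ℕ) r' r, ?_, h, hh, ?_⟩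
      · intro i
        refine Fin.lastCases ?_ (fun j => ?_) i
        · simp only [Fin.snoc_last, Fin.val_last]
          omega
        · simp only [Fin.snoc_castSucc, Fin.val_castSucc]
          exact hr' j
      · rw [wP_succ]
        simp only [Fin.snoc_last, Fin.snoc_castSucc]
        rw [mul_assoc, he, mul_assoc]
    · rintro ⟨r, hr, h, hh, rfl⟩
      rw [wP_succ, mul_assoc]
      refine Set.mul_mem_mul (wRR_mem n _ m _ (hr _).1) ((IH _).2 ⟨_, fun i => ?_, h, hh, rfl⟩)
      have := hr i.castSucc
      simp only [Fin.val_castSucc] at this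
      omega

theorem WI_fix (n a b : ℕ) (x : Fin (n + 1)) (ha : 1 ≤ a) (hx : b < x)
    (g : Equiv.Perm (Fin (n + 1))) (hg : g ∈ WI n (Finset.Icc a b)) : g x = x := by
  have : WI n (Finset.Icc a b) ≤ MulAction.stabilizer (Equiv.Perm (Fin (n + 1))) x := by
    unfold WI
    rw [Subgroup.closure_le]
    rintro _ ⟨i, hi, rfl⟩
    simp only [Finset.coe_Icc, Set.mem_Icc] at hi
    simp only [SetLike.mem_coe, MulAction.mem_stabilizer_iff, Equiv.Perm.smul_def]
    ext
    rw [sRef_val n i (by omega) (by omega)]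
    split_ifs <;> omega
  exact this hg

theorem wP_mem (n m k : ℕ) (r : Fin k → ℕ) (hr : ∀ i, 1 ≤ r i) :
    wP n m k r ∈ WI n (Finset.Icc 1 m) := by
  unfold wP
  apply Subgroup.list_prod_mem
  intro x hx
  obtain ⟨t, rfl⟩ := (List.mem_ofFn' _ _).1 hx
  exact WI_mono n _ _ _ _ le_rfl (Nat.sub_le _ _) (wRR_mem n 1 _ _ (hr _))

theorem distinct (n k : ℕ) : ∀ m, k ≤ m → m ≤ n → ∀ r r' : Fin k → ℕ,
    (∀ i : Fin k, 1 ≤ r i ∧ r i ≤ m - k + (i : ℕ) + 2) →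
    (∀ i : Fin k, 1 ≤ r' i ∧ r' i ≤ m - k + (i : ℕ) + 2) →
    ∀ h ∈ WI n (Finset.Icc 1 (m - k)), ∀ h' ∈ WI n (Finset.Icc 1 (m - k)),
      wP n m k r * h = wP n m k r' * h' → r = r' := by
  induction k with
  | zero =>
    intros
    exact Subsingleton.elim _ _
  | succ k ih =>
    intro m hkm hmn r r' hr hr' h hh h' hh' heq
    have e : m - (k + 1) = m - 1 - k := by omega
    rw [wP_succ, wP_succ, mul_assoc, mul_assoc] at heq
    have val : ∀ (r : Fin (k + 1) → ℕ), (∀ i, 1 ≤ r i ∧ r i ≤ m - (k + 1) + (i : ℕ) + 2) →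
        ∀ h ∈ WI n (Finset.Icc 1 (m - (k + 1))),
        ((wRR n (r (Fin.last k)) m * (wP n (m - 1) k (fun i => r i.castSucc) * h))
          ⟨m, by omega⟩ : ℕ) = r (Fin.last k) - 1 := by
      intro r hr h hh
      have hl := hr (Fin.last k)
      simp only [Fin.val_last] at hl
      rw [Equiv.Perm.mul_apply, WI_fix n 1 (m - 1) ⟨m, by omega⟩ le_rfl (by simp; omega) _
        (Subgroup.mul_mem _ (wP_mem n _ _ _ (fun i => (hr _).1))
          (WI_mono n _ _ _ _ le_rfl (by omega) hh)),
        wRR_val n m hmn (m + 1 - r (Fin.last k)) _ hl.1 (by omega)]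
      simp
    have v1 := val r hr h hh
    have v2 := val r' hr' h' hh'
    rw [heq, v2] at v1
    have hlast : r (Fin.last k) = r' (Fin.last k) := by
      have := (hr (Fin.last k)).1
      have := (hr' (Fin.last k)).1
      omega
    rw [hlast] at heq
    have heq' := mul_left_cancel heq
    rw [e] at hh hh' hr hr'
    have := ih (m - 1) (by omega) (by omega) _ _ (fun i => hr i.castSucc) (fun i => hr' i.castSucc)
      h hh h' hh' heq'
    funext i
    refine Fin.lastCases hlast (fun j => congrFun this j) i

/-- Let `1 ≤ k ≤ n` and `a_1 ≤ ⋯ ≤ a_k` (here `a_ι = a ⟨ι-1⟩`) with `1 ≤ a_1`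
and `a_ι ≤ n-k+ι+1`.  Then the product set `W_{⟦a_k,n⟧} ⋯ W_{⟦a_1,n-k+1⟧} · W_{J_k}` is the
union of the left cosets `w_{r_k}^n ⋯ w_{r_1}^{n-k+1} W_{J_k}` over the tuples
`(r_1, …, r_k) ∈ ∏_ι ⟦a_ι, n-k+ι+1⟧`, and these cosets are pairwise distinct. -/
theorem stmt10 (n k : ℕ) (hn : 1 ≤ n) (hk1 : 1 ≤ k) (hkn : k ≤ n)
    (a : Fin k → ℕ) (hmono : Monotone a) (ha1 : 1 ≤ a ⟨0, hk1⟩)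
    (hub : ∀ ι : Fin k, a ι ≤ n - k + (ι : ℕ) + 2) :
    ((List.ofFn fun t : Fin k =>
        ((WI n (Finset.Icc (a t.rev) (n - (t : ℕ))) : Subgroup _) : Set (Equiv.Perm (Fin (n + 1))))).prod *
        ((WI n (Finset.Icc 1 (n - k)) : Subgroup _) : Set (Equiv.Perm (Fin (n + 1))))
      = ⋃ r ∈ {r : Fin k → ℕ | ∀ ι : Fin k, a ι ≤ r ι ∧ r ι ≤ n - k + (ι : ℕ) + 2},
          {wProd n k r} * ((WI n (Finset.Icc 1 (n - k)) : Subgroup _) : Set (Equiv.Perm (Fin (n + 1)))))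
    ∧ ∀ r ∈ {r : Fin k → ℕ | ∀ ι : Fin k, a ι ≤ r ι ∧ r ι ≤ n - k + (ι : ℕ) + 2},
        ∀ r' ∈ {r : Fin k → ℕ | ∀ ι : Fin k, a ι ≤ r ι ∧ r ι ≤ n - k + (ι : ℕ) + 2},
        ({wProd n k r} : Set (Equiv.Perm (Fin (n + 1)))) * (WI n (Finset.Icc 1 (n - k)) : Subgroup _)
          = {wProd n k r'} * ((WI n (Finset.Icc 1 (n - k)) : Subgroup _) : Set (Equiv.Perm (Fin (n + 1))))
        → r = r' := by
  have ha : ∀ i, 1 ≤ a i := fun i => ha1.trans (hmono (Fin.mk_le_of_le_val (Nat.zero_le _)))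
  refine ⟨?_, ?_⟩
  · ext g
    refine (cover n k n hkn le_rfl a hmono ha hub g).trans ?_
    simp only [Set.mem_iUnion, Set.singleton_mul, Set.mem_image, Set.mem_setOf_eq,
      SetLike.mem_coe, exists_prop]
    rfl
  · intro r hr r' hr' heq
    have h1 : wProd n k r ∈ ({wProd n k r'} : Set (Equiv.Perm (Fin (n + 1)))) *
        ((WI n (Finset.Icc 1 (n - k)) : Subgroup _) : Set (Equiv.Perm (Fin (n + 1)))) := by
      rw [← heq]
      exact Set.mem_mul.2 ⟨_, rfl, 1, Subgroup.one_mem _, mul_one _⟩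
    obtain ⟨_, rfl, h, hh, he⟩ := Set.mem_mul.1 h1
    exact distinct n k n hkn le_rfl r r' (fun i => ⟨(ha i).trans (hr i).1, (hr i).2⟩)
      (fun i => ⟨(ha i).trans (hr' i).1, (hr' i).2⟩) 1 (Subgroup.one_mem _) h hh
      ((mul_one _).trans he.symm)
end
end

section
/- Let 1 ≤ k ≤ n, let i be an integer with 0 ≤ i ≤ n, and let r_1,…,r_k be integers such that 1 ≤ r_j ≤ n−k+j+1−i for each j = 1,…,k. Let w_i = w_i^n w_{i−1}^{n−1} ⋯ w_1^{n−i+1} ∈ W. Then w_i · w_{r_k}^{n} w_{r_{k−1}}^{n−1} ⋯ w_{r_1}^{n−k+1} = w_{r_k+i}^{n} w_{r_{k−1}+i}^{n−1} ⋯ w_{r_1+i}^{n−k+1} · w_i^{n−k} w_{i−1}^{n−k−1} ⋯ w_1^{n−i+1−k}. -/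
open scoped Pointwise
open Matrix

noncomputable section

theorem aux_wRR_empty (n a b : ℕ) (h : b < a) : wRR n a b = 1 := by
  have : b + 1 - a = 0 := by omega
  simp [wRR, this]

theorem aux_wRR_succ (n a b : ℕ) (h : a ≤ b + 1) :
    wRR n a (b + 1) = wRR n a b * sRef n (b + 1) := by
  have h1 : b + 1 + 1 - a = (b + 1 - a) + 1 := by omega
  have h2 : a + (b + 1 - a) = b + 1 := by omega
  simp [wRR, h1, List.range'_concat, h2]

theorem aux_comm (n a b : ℕ) (h : a + 2 ≤ b) : Commute (sRef n a) (sRef n b) := by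
  unfold sRef
  split_ifs with h1 h2
  · apply Equiv.Perm.Disjoint.commute
    apply Equiv.Perm.disjoint_swap_swap
    simp [Fin.ext_iff]
    omega
  · exact Commute.one_right _
  · exact Commute.one_left _
  · exact Commute.one_left _

theorem aux_braid (n a : ℕ) (h : 1 ≤ a) (h' : a + 1 ≤ n) :
    sRef n a * sRef n (a + 1) * sRef n a = sRef n (a + 1) * sRef n a * sRef n (a + 1) := by
  have e1 : (1 ≤ a ∧ a ≤ n) := by omega
  have e2 : (1 ≤ a + 1 ∧ a + 1 ≤ n) := by omega
  have key : ∀ p q u : Fin (n + 1), p ≠ q → q ≠ u → p ≠ u →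
      Equiv.swap p q * Equiv.swap q u * Equiv.swap p q =
        Equiv.swap q u * Equiv.swap p q * Equiv.swap q u := by
    intro p q u h1 h2 h3
    rw [Equiv.swap_mul_swap_mul_swap h1 h3, Equiv.swap_comm p q, Equiv.swap_comm q u,
      Equiv.swap_mul_swap_mul_swap h2.symm h3.symm, Equiv.swap_comm]
  simp only [sRef, dif_pos e1, dif_pos e2, Nat.add_sub_cancel]
  apply key <;> simp only [ne_eq, Fin.mk.injEq] <;> omega

theorem aux_sq (n a : ℕ) : sRef n a * sRef n a = 1 := by
  unfold sRef
  split_ifs <;> simp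

theorem aux_wRR_comm (n a b m : ℕ) (h : b + 2 ≤ m) : Commute (wRR n a b) (sRef n m) := by
  unfold wRR
  apply Commute.symm
  apply Commute.list_prod_right
  intro x hx
  simp only [List.mem_map, List.mem_range'_1] at hx
  obtain ⟨y, hy, rfl⟩ := hx
  exact (aux_comm n y m (by omega)).symm

theorem aux_conj (n a j m : ℕ) (ha : 1 ≤ a) (haj : a ≤ j) (hjm : j < m) (hm : m ≤ n) :
    wRR n a m * sRef n j = sRef n (j + 1) * wRR n a m := by
  induction m with
  | zero => omega
  | succ m ih =>
    rw [aux_wRR_succ n a m (by omega)]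
    rcases Nat.lt_or_ge j m with h | h
    · rw [mul_assoc, ← (aux_comm n j (m + 1) (by omega)).eq, ← mul_assoc,
        ih h (by omega), mul_assoc]
    · obtain rfl : j = m := by omega
      obtain ⟨j, rfl⟩ : ∃ p, j = p + 1 := ⟨j - 1, by omega⟩
      rw [aux_wRR_succ n a j (by omega)]
      have hb := aux_braid n (j + 1) (by omega) hm
      have hc := (aux_wRR_comm n a j (j + 1 + 1) (by omega)).eq
      simp only [mul_assoc] at hb ⊢
      rw [hb, ← mul_assoc, hc, mul_assoc]

theorem aux_conjw (n a c m : ℕ) (ha : 1 ≤ a) (hac : a ≤ c) (p : ℕ) (hp : p < m) (hm : m ≤ n) :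
    wRR n a m * wRR n c p = wRR n (c + 1) (p + 1) * wRR n a m := by
  induction p with
  | zero => rw [aux_wRR_empty n c 0 (by omega), aux_wRR_empty n (c + 1) _ (by omega)]; simp
  | succ p ih =>
    rcases Nat.lt_or_ge (p + 1) c with h | h
    · rw [aux_wRR_empty n c _ h, aux_wRR_empty n (c + 1) _ (by omega)]; simp
    · rw [aux_wRR_succ n c p h, aux_wRR_succ n (c + 1) (p + 1) (by omega), ← mul_assoc,
        ih (by omega), mul_assoc, aux_conj n a (p + 1) m ha (by omega) hp hm, mul_assoc]

def auxB (n i m : ℕ) : Equiv.Perm (Fin (n + 1)) :=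
  ((List.range i).map fun t => wRR n (i - t) (m - t)).prod

theorem auxB_succ (n i m : ℕ) : auxB n (i + 1) m = wRR n (i + 1) m * auxB n i (m - 1) := by
  simp only [auxB, List.range_succ_eq_map, List.map_cons, List.prod_cons, List.map_map]
  congr 2
  apply List.map_congr_left
  intro t _
  simp only [Function.comp]
  congr 1 <;> omega

theorem auxB_comm (n i b m : ℕ) (h : b + 2 ≤ m) : Commute (auxB n i b) (sRef n m) := by
  unfold auxB
  apply Commute.symm
  apply Commute.list_prod_right
  intro x hx
  simp only [List.mem_map] at hx
  obtain ⟨y, hy, rfl⟩ := hx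
  exact (aux_wRR_comm n _ _ m (by omega)).symm

theorem aux_step (n i m r : ℕ) (hm : m ≤ n) (hr : 1 ≤ r) (h : r + i ≤ m + 1) :
    auxB n i m * wRR n r m = wRR n (r + i) m * auxB n i (m - 1) := by
  induction i generalizing m with
  | zero => simp [auxB]
  | succ i ih =>
    obtain ⟨m, rfl⟩ : ∃ p, m = p + 1 := ⟨m - 1, by omega⟩
    have hc : auxB n i (m - 1) * sRef n (m + 1) = sRef n (m + 1) * auxB n i (m - 1) := by
      rcases Nat.eq_zero_or_pos i with rfl | hi
      · simp [auxB]
      · exact (auxB_comm n i (m - 1) (m + 1) (by omega)).eq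
    have h1 := aux_conjw n (i + 1) (r + i) (m + 1) (by omega) (by omega) m (by omega) hm
    have h2 := ih m (by omega) (by omega)
    have h3 := aux_wRR_succ n (i + 1) m (by omega)
    rw [auxB_succ, auxB_succ, aux_wRR_succ n r m (by omega)]
    simp only [Nat.add_sub_cancel]
    calc _ = wRR n (i + 1) (m + 1) * (auxB n i m * wRR n r m) * sRef n (m + 1) := by
            simp only [mul_assoc]
      _ = (wRR n (i + 1) (m + 1) * wRR n (r + i) m) * (auxB n i (m - 1) * sRef n (m + 1)) := by
            rw [h2]; simp only [mul_assoc]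
      _ = wRR n (r + i + 1) (m + 1) * (wRR n (i + 1) m * (sRef n (m + 1) * sRef n (m + 1))
            * auxB n i (m - 1)) := by
            rw [h1, hc, h3]; simp only [mul_assoc]
      _ = _ := by rw [aux_sq, mul_one]; rfl

theorem aux_main (n i k : ℕ) (f : ℕ → ℕ) (hk : k ≤ n)
    (hf : ∀ t < k, 1 ≤ f t ∧ f t + i ≤ n - t + 1) :
    auxB n i n * ((List.range k).map fun t => wRR n (f t) (n - t)).prod =
      ((List.range k).map fun t => wRR n (f t + i) (n - t)).prod * auxB n i (n - k) := by
  induction k with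
  | zero => simp
  | succ k ih =>
    have h1 := ih (by omega) (fun t ht => hf t (by omega))
    have h2 := hf k (by omega)
    have h3 := aux_step n i (n - k) (f k) (by omega) h2.1 h2.2
    simp only [List.range_succ, List.map_append, List.prod_append, List.map_cons, List.map_nil,
      List.prod_singleton]
    rw [← mul_assoc, h1, mul_assoc, h3, mul_assoc, Nat.sub_sub]

theorem aux_wProd (n k : ℕ) (r : Fin k → ℕ) (f : ℕ → ℕ)
    (h : ∀ t : Fin k, f t = r t.rev) :
    wProd n k r = ((List.range k).map fun t => wRR n (f t) (n - t)).prod := by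
  unfold wProd
  congr 1
  apply List.ext_getElem
  · simp
  · intro t h1 h2
    simp at h1
    simp [← h]

/-- Let `1 ≤ k ≤ n`, `0 ≤ i ≤ n`, and let `r_1, …, r_k` (here `r_j = r ⟨j-1⟩`)
be integers with `1 ≤ r_j ≤ n-k+j+1-i`. With `w_i = w_i^n w_{i-1}^{n-1} ⋯ w_1^{n-i+1}` one has
`w_i · w_{r_k}^n ⋯ w_{r_1}^{n-k+1} = w_{r_k+i}^n ⋯ w_{r_1+i}^{n-k+1} · w_i^{n-k} w_{i-1}^{n-k-1} ⋯ w_1^{n-i+1-k}`. -/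
theorem stmt14 (n k i : ℕ) (hn : 1 ≤ n) (hk1 : 1 ≤ k) (hkn : k ≤ n) (hi : i ≤ n)
    (r : Fin k → ℕ) (hr : ∀ j : Fin k, 1 ≤ r j ∧ r j + i ≤ n - k + (j : ℕ) + 2) :
    wBig n i * wProd n k r =
      wProd n k (fun j => r j + i) *
        ((List.range i).map fun t => wRR n (i - t) (n - k - t)).prod := by
  set f : ℕ → ℕ := fun t => if h : t < k then r (Fin.rev ⟨t, h⟩) else 0 with hfd
  have hf : ∀ t : Fin k, f t = r t.rev := by
    intro t
    simp [hfd]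
  rw [aux_wProd n k r f hf, aux_wProd n k (fun j => r j + i) (fun t => f t + i)
    (fun t => by simp [hf t])]
  apply aux_main n i k f hkn
  intro t ht
  have h1 := hr (Fin.rev ⟨t, ht⟩)
  rw [← hf ⟨t, ht⟩] at h1
  simp only [Fin.val_rev] at h1
  omega
end
end
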